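/- Let W be a finite reflection group with root system Φ and let a be a generic point for W. Then the affine span of the orbit {w(a) : w ∈ W} is the affine subspace V_a = a + span_ℝ(Φ), i.e. the affine subspace through a with direction the linear span of Φ. In particular the permutahedron Perm^a(W) is full-dimensional in V_a, of dimension dim span_ℝ(Φ). -/

import Mathlib

/-!
The vector span of the orbit of `a` equals `span Φ`, which gives both claims.

Each reflection along a root moves every vector by a multiple of that root, so every element of
`W` moves every vector within its coset of `span Φ` (`sub_mem_span_of_mem`); this bounds the
vector span from above. Conversely, for `α ∈ Φ` the reflection along `α` lies in `W`, and
genericity makes the displacement of `a` under it a nonzero multiple of `α`, so `α` itself lies in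
the vector span of the orbit (`vectorSpan_orbitSet`). The permutahedron has the same affine span
as the orbit because it is its convex hull.
-/

open scoped RealInnerProductSpace

variable {V : Type*} [NormedAddCommGroup V] [InnerProductSpace ℝ V]

/-- `s` acts as the orthogonal reflection along the nonzero vector `α`:
`s v = v - 2 (⟪v,α⟫/⟪α,α⟫) α`. -/
def IsReflAlong (s : V ≃ₗᵢ[ℝ] V) (α : V) : Prop :=
  α ≠ 0 ∧ ∀ v : V, s v = v - ((2 * ⟪v, α⟫ / ⟪α, α⟫) • α)

/-- `s` is a reflection. -/
def IsReflection (s : V ≃ₗᵢ[ℝ] V) : Prop :=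
  ∃ α : V, IsReflAlong s α

/-- A reflection group: a subgroup of the group of linear isometries of `V` generated by
the reflections it contains. -/
def IsReflectionGroup (W : Subgroup (V ≃ₗᵢ[ℝ] V)) : Prop :=
  W = Subgroup.closure {s | IsReflection s ∧ s ∈ W}

/-- `a` is a generic point for `W`: it is fixed by no reflection belonging to `W`. -/
def IsGeneric (W : Subgroup (V ≃ₗᵢ[ℝ] V)) (a : V) : Prop :=
  ∀ s ∈ W, IsReflection s → s a ≠ a

/-- The `W`-orbit of the point `a`. -/
def orbitSet (W : Subgroup (V ≃ₗᵢ[ℝ] V)) (a : V) : Set V :=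
  {x | ∃ w ∈ W, x = w a}

/-- The permutahedron `Perm^a(W)`: the convex hull of the `W`-orbit of `a`. -/
noncomputable def permutahedron (W : Subgroup (V ≃ₗᵢ[ℝ] V)) (a : V) : Set V :=
  convexHull ℝ (orbitSet W a)

/-- A root system for `W`. -/
structure IsRootSystem (W : Subgroup (V ≃ₗᵢ[ℝ] V)) (Φ : Set V) : Prop where
  finite : Φ.Finite
  nonempty : Φ.Nonempty
  ne_zero : ∀ α ∈ Φ, α ≠ 0
  gen : W = Subgroup.closure {s | ∃ α ∈ Φ, IsReflAlong s α}
  line : ∀ α ∈ Φ, {β ∈ Φ | ∃ t : ℝ, β = t • α} = {α, -α}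
  stable : ∀ w ∈ W, (⇑w) '' Φ = Φ

/-- The positive system determined by the generic point `a`: roots `α` with `⟪a, α⟫ > 0`. -/
def posSystem (a : V) (Φ : Set V) : Set V :=
  {α ∈ Φ | 0 < ⟪a, α⟫}

/-- `Δ` is a simple system for the positive system `Φp`: `Δ ⊆ Φp` is linearly independent and
every element of `Φp` is a linear combination of `Δ` with nonnegative coefficients. -/
def IsSimpleSystem (Φp Δ : Set V) : Prop :=
  Δ ⊆ Φp ∧ LinearIndependent ℝ ((↑) : Δ → V) ∧
    ∀ β ∈ Φp, ∃ c : V →₀ ℝ, (c.support : Set V) ⊆ Δ ∧ (∀ v : V, 0 ≤ c v) ∧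
      β = c.sum fun v r => r • v

/-- The subgroup generated by the reflections along the vectors of `I`. -/
def genSubgroup (I : Set V) : Subgroup (V ≃ₗᵢ[ℝ] V) :=
  Subgroup.closure {s | ∃ β ∈ I, IsReflAlong s β}

/-- The reflection in the hyperplane orthogonal to `α` has the form required by `IsReflAlong`. -/
theorem exists_isReflAlong {α : V} (hα : α ≠ 0) : ∃ s : V ≃ₗᵢ[ℝ] V, IsReflAlong s α := by
  refine ⟨(ℝ ∙ α)ᗮ.reflection, hα, fun v => ?_⟩
  rw [Submodule.reflection_orthogonal_apply, Submodule.reflection_singleton_apply,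
    real_inner_self_eq_norm_sq, real_inner_comm, neg_sub, two_nsmul, ← add_smul]
  congr 2
  simp only [RCLike.ofReal_real_eq_id, id]
  ring

theorem sub_mem_span_of_mem {W : Subgroup (V ≃ₗᵢ[ℝ] V)} {Φ : Set V} (hΦ : IsRootSystem W Φ)
    {w : V ≃ₗᵢ[ℝ] V} (hw : w ∈ W) (v : V) : w v - v ∈ Submodule.span ℝ Φ := by
  rw [hΦ.gen] at hw
  induction hw using Subgroup.closure_induction generalizing v with
  | mem s hs =>
    obtain ⟨α, hα, -, hs⟩ := hs
    rw [hs, sub_sub_cancel_left]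
    exact neg_mem (Submodule.smul_mem _ _ (Submodule.subset_span hα))
  | one => simp
  | mul x y _ _ hx hy =>
    have h := add_mem (hx (y v)) (hy v)
    rwa [sub_add_sub_cancel] at h
  | inv x _ hx =>
    have h := neg_mem (hx (x⁻¹ v))
    have e : x (x⁻¹ v) = v := x.apply_symm_apply v
    rwa [e, neg_sub] at h

theorem mem_orbitSet_self (W : Subgroup (V ≃ₗᵢ[ℝ] V)) (a : V) : a ∈ orbitSet W a :=
  ⟨1, W.one_mem, rfl⟩

theorem vectorSpan_orbitSet {W : Subgroup (V ≃ₗᵢ[ℝ] V)} {Φ : Set V} (hΦ : IsRootSystem W Φ)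
    {a : V} (ha : IsGeneric W a) : vectorSpan ℝ (orbitSet W a) = Submodule.span ℝ Φ := by
  apply le_antisymm
  · rw [vectorSpan_eq_span_vsub_set_right ℝ (mem_orbitSet_self W a), Submodule.span_le]
    rintro _ ⟨_, ⟨w, hw, rfl⟩, rfl⟩
    exact sub_mem_span_of_mem hΦ hw a
  · rw [Submodule.span_le]
    intro α hα
    obtain ⟨s, hs⟩ := exists_isReflAlong (hΦ.ne_zero α hα)
    have hsW : s ∈ W := by
      rw [hΦ.gen]
      exact Subgroup.subset_closure ⟨α, hα, hs⟩
    have hmem : a -ᵥ s a ∈ vectorSpan ℝ (orbitSet W a) :=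
      vsub_mem_vectorSpan ℝ (mem_orbitSet_self W a) ⟨s, hsW, rfl⟩
    have hne := ha s hsW ⟨α, hs⟩
    rw [hs.2, vsub_eq_sub, sub_sub_cancel] at hmem
    rw [hs.2] at hne
    refine (Submodule.smul_mem_iff _ fun h0 => hne ?_).1 hmem
    rw [h0, zero_smul, sub_zero]

/-- the affine span of the orbit of a generic point is `a + span ℝ Φ`;
in particular the permutahedron is full-dimensional there, of dimension `dim span ℝ Φ`. -/
theorem affineSpan_orbit_eq [FiniteDimensional ℝ V]
    (W : Subgroup (V ≃ₗᵢ[ℝ] V)) (hWfin : (W : Set (V ≃ₗᵢ[ℝ] V)).Finite)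
    (Φ : Set V) (hΦ : IsRootSystem W Φ) (a : V) (ha : IsGeneric W a) :
    (affineSpan ℝ (orbitSet W a) : Set V) = {x : V | x - a ∈ Submodule.span ℝ Φ} ∧
    Module.finrank ℝ (vectorSpan ℝ (permutahedron W a)) =
      Module.finrank ℝ (Submodule.span ℝ Φ) := by
  have hspan := vectorSpan_orbitSet hΦ ha
  constructor
  · ext x
    rw [SetLike.mem_coe, Set.mem_ofPred_eq, ← hspan, ← direction_affineSpan, ← vsub_eq_sub,
      AffineSubspace.vsub_right_mem_direction_iff_mem
        (mem_affineSpan ℝ (mem_orbitSet_self W a))]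
  · rw [permutahedron, ← direction_affineSpan, affineSpan_convexHull, direction_affineSpan, hspan]
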